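/- arXiv:2106.15676 — 4 statements merged into one kernel-verified Lean document; each statement's English description precedes it below -/
import Mathlib

section
/- Let (X,d) be a compact metric space, κ ≥ 1, and let f₁,…,f_κ : X → X be homeomorphisms. Suppose there is a nonempty subset S ⊆ {1,…,κ} such that f_i is an isometry of X for every i ∈ S and the sub-semigroup action generated by {f_i : i ∈ S} is minimal, i.e. for every x ∈ X there exists an infinite word ω ∈ S^ℕ such that {f_ω^n(x) : n ≥ 0} is dense in X. Then the semigroup action generated by f₁,…,f_κ has frequent hitting times. -/
open Metric

noncomputable section

/-- Composition `f_{ω_{p-1}} ∘ ⋯ ∘ f_{ω₀}` along a finite word `w = (ω₀, …, ω_{p-1})`. -/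
def wordComp {X : Type*} {κ : ℕ} (f : Fin κ → X → X) (w : List (Fin κ)) (x : X) : X :=
  w.foldl (fun y i => f i y) x

/-- Composition `f_ω^n = f_{ω_{n-1}} ∘ ⋯ ∘ f_{ω₀}` along an infinite word `ω ∈ {1,…,κ}^ℕ`. -/
def seqComp {X : Type*} {κ : ℕ} (f : Fin κ → X → X) (ω : ℕ → Fin κ) : ℕ → X → X
  | 0 => id
  | n + 1 => f (ω n) ∘ seqComp f ω n

/-- The semigroup action generated by `f₁, …, f_κ` has *frequent hitting times*:
for every `ε > 0` there is `K(ε)` such that for all `x₁, x₂ ∈ X` and every radius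
`0 < r ≤ ε/2` there are `p ≤ K(ε)`, a word `w` of length `p` and a point `z` with
`B(z, r/2) ⊆ f_w^p(B(x₁,ε)) ∩ B(x₂,r)`. -/
def FrequentHittingTimes {X : Type*} [MetricSpace X] {κ : ℕ} (f : Fin κ → X → X) : Prop :=
  ∀ ε : ℝ, 0 < ε → ∃ K : ℕ, ∀ x₁ x₂ : X, ∀ r : ℝ, 0 < r → r ≤ ε / 2 →
    ∃ p ≤ K, ∃ w : List (Fin κ), w.length = p ∧ ∃ z : X,
      Metric.ball z (r / 2) ⊆ wordComp f w '' Metric.ball x₁ ε ∩ Metric.ball x₂ r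

/-!
Finitely many finite words suffice to move every point of a finite net near every other point of the
net. As the letters act by isometries, the same words move every point of the space near every
other point, which bounds the word lengths uniformly. A surjective isometry carries balls onto balls
of the same radius, so the image of `ball x₁ ε` contains `ball x₂ (r / 2)` as soon as its centre is
within `ε / 2` of `x₂`.
-/

section Words

variable {X : Type*} {κ : ℕ} {f : Fin κ → X → X} {S : Set (Fin κ)}

/-- The forward orbit of `x` under the semigroup generated by the maps `f i`, `i ∈ S`. The empty
word is allowed, so `x` itself belongs to it. -/
def wordOrbit (f : Fin κ → X → X) (S : Set (Fin κ)) (x : X) : Set X :=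
  (fun w => wordComp f w x) '' {w : List (Fin κ) | ∀ i ∈ w, i ∈ S}

theorem wordComp_append_singleton (f : Fin κ → X → X) (w : List (Fin κ)) (i : Fin κ) (x : X) :
    wordComp f (w ++ [i]) x = f i (wordComp f w x) :=
  List.foldl_append

theorem apply_mem_wordOrbit {x y : X} {i : Fin κ} (hi : i ∈ S) (hy : y ∈ wordOrbit f S x) :
    f i y ∈ wordOrbit f S x := by
  obtain ⟨w, hw, rfl⟩ := hy
  refine ⟨w ++ [i], ?_, wordComp_append_singleton f w i x⟩
  simpa [or_imp, forall_and, hi] using hw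

theorem seqComp_mem_wordOrbit {ω : ℕ → Fin κ} (hω : ∀ n, ω n ∈ S) (n : ℕ) (x : X) :
    seqComp f ω n x ∈ wordOrbit f S x := by
  induction n with
  | zero => exact ⟨[], by simp, rfl⟩
  | succ n ih => exact apply_mem_wordOrbit (hω n) ih

theorem surjective_wordComp {w : List (Fin κ)} (hf : ∀ i ∈ w, Function.Surjective (f i)) :
    Function.Surjective (wordComp f w) := by
  induction w with
  | nil => exact Function.surjective_id
  | cons i w ih =>
    rw [List.forall_mem_cons] at hf
    exact (ih hf.2).comp hf.1

theorem isometry_wordComp [PseudoEMetricSpace X] {w : List (Fin κ)}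
    (hf : ∀ i ∈ w, Isometry (f i)) : Isometry (wordComp f w) := by
  induction w with
  | nil => exact isometry_id
  | cons i w ih =>
    rw [List.forall_mem_cons] at hf
    exact (ih hf.2).comp hf.1

theorem exists_bounded_word_dist_lt [PseudoMetricSpace X]
    (hX : TotallyBounded (Set.univ : Set X)) (hiso : ∀ i ∈ S, Isometry (f i))
    (hdense : ∀ x, Dense (wordOrbit f S x)) {δ : ℝ} (hδ : 0 < δ) :
    ∃ K : ℕ, ∀ x y : X, ∃ w : List (Fin κ),
      w.length ≤ K ∧ (∀ i ∈ w, i ∈ S) ∧ dist (wordComp f w x) y < δ := by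
  have exists_word (a b : X) :
      ∃ w : List (Fin κ), (∀ i ∈ w, i ∈ S) ∧ dist (wordComp f w a) b < δ / 3 := by
    obtain ⟨_, ⟨w, hwS, rfl⟩, hw⟩ := (hdense a).exists_dist_lt b (by positivity : 0 < δ / 3)
    exact ⟨w, hwS, by rwa [dist_comm]⟩
  choose word hwordS hword using exists_word
  obtain ⟨net, hfin, hcover⟩ := totallyBounded_iff.mp hX (δ / 3) (by positivity)
  have exists_near (x : X) : ∃ a ∈ net, dist x a < δ / 3 := by
    simpa only [Set.mem_iUnion₂, mem_ball, exists_prop] using hcover (Set.mem_univ x)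
  obtain ⟨K, hK⟩ := ((hfin.prod hfin).image fun p => (word p.1 p.2).length).bddAbove
  refine ⟨K, fun x y => ?_⟩
  obtain ⟨a, ha, hxa⟩ := exists_near x
  obtain ⟨b, hb, hyb⟩ := exists_near y
  refine ⟨word a b, hK ⟨(a, b), ⟨ha, hb⟩, rfl⟩, hwordS a b, ?_⟩
  have hword_iso : Isometry (wordComp f (word a b)) :=
    isometry_wordComp fun i hi => hiso i (hwordS a b i hi)
  calc
    dist (wordComp f (word a b) x) y
      ≤ dist (wordComp f (word a b) x) (wordComp f (word a b) a) +
          dist (wordComp f (word a b) a) b + dist b y := dist_triangle4 _ _ _ _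
    _ = dist x a + dist (wordComp f (word a b) a) b + dist y b := by
      rw [hword_iso.dist_eq, dist_comm b]
    _ < δ / 3 + δ / 3 + δ / 3 := by gcongr; exact hword a b
    _ = δ := add_thirds δ

end Words

theorem image_ball_of_isometry_of_surjective {X Y : Type*} [PseudoMetricSpace X]
    [PseudoMetricSpace Y] {g : X → Y} (hg : Isometry g) (hsurj : Function.Surjective g)
    (x : X) (r : ℝ) : g '' ball x r = ball (g x) r := by
  rw [← hg.preimage_ball, Set.image_preimage_eq _ hsurj]

theorem frequentHittingTimes_of_minimal_isometries_general {X : Type*} [MetricSpace X]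
    (hX : TotallyBounded (Set.univ : Set X)) {κ : ℕ} {f : Fin κ → X → X} {S : Set (Fin κ)}
    (hiso : ∀ i ∈ S, Isometry (f i)) (hsurj : ∀ i ∈ S, Function.Surjective (f i))
    (hdense : ∀ x, Dense (wordOrbit f S x)) : FrequentHittingTimes f := by
  intro ε hε
  obtain ⟨K, hK⟩ := exists_bounded_word_dist_lt hX hiso hdense (half_pos hε)
  refine ⟨K, fun x₁ x₂ r hr hrε => ?_⟩
  obtain ⟨w, hwK, hwS, hw⟩ := hK x₁ x₂
  have himage : wordComp f w '' ball x₁ ε = ball (wordComp f w x₁) ε :=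
    image_ball_of_isometry_of_surjective (isometry_wordComp fun i hi => hiso i (hwS i hi))
      (surjective_wordComp fun i hi => hsurj i (hwS i hi)) x₁ ε
  refine ⟨w.length, hwK, w, rfl, x₂, Set.subset_inter ?_ (ball_subset_ball (by linarith))⟩
  rw [himage]
  rw [dist_comm] at hw
  exact ball_subset_ball' (by linarith)

/-- **A minimal sub-collection of isometries forces frequent hitting times.**
If `f₁, …, f_κ` are homeomorphisms of a compact metric space and there is a nonempty
`S ⊆ {1,…,κ}` such that each `f_i`, `i ∈ S`, is an isometry and the sub-semigroup action
generated by `{f_i : i ∈ S}` is minimal — for every `x ∈ X` there is an infinite word `ω`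
with letters in `S` whose orbit `{f_ω^n(x) : n ≥ 0}` is dense in `X` — then the whole
semigroup action has frequent hitting times. -/
theorem frequentHittingTimes_of_minimal_isometries {X : Type*} [MetricSpace X]
    [CompactSpace X] (κ : ℕ) (f : Fin κ → X ≃ₜ X)
    (S : Set (Fin κ)) (hS : S.Nonempty)
    (hiso : ∀ i ∈ S, Isometry (f i : X → X))
    (hmin : ∀ x : X, ∃ ω : ℕ → Fin κ, (∀ n, ω n ∈ S) ∧
      Dense (Set.range fun n : ℕ => seqComp (fun i => (f i : X → X)) ω n x)) :
    FrequentHittingTimes (fun i => (f i : X → X)) :=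
  frequentHittingTimes_of_minimal_isometries_general isCompact_univ.totallyBounded hiso
    (fun i _ => (f i).surjective) fun x =>
      let ⟨_, hω, hdense⟩ := hmin x
      hdense.mono (Set.range_subset_iff.mpr fun n => seqComp_mem_wordOrbit hω n x)

end
end

section
/- Let T : ℝ^d → ℝ^d be an invertible linear map and suppose ℝ^d = E⁺ ⊕ E⁻ is a direct sum of T-invariant linear subspaces (T(E⁺) = E⁺ and T(E⁻) = E⁻) such that for some λ > 1 one has ‖T v‖ ≥ λ‖v‖ for every v ∈ E⁺ and ‖T v‖ ≤ λ⁻¹‖v‖ for every v ∈ E⁻ (Euclidean norm). Then there exist θ ∈ (0,1) and ζ > 0 such that the cones C⁺ := {w = w⁺ + w⁻ : w⁺ ∈ E⁺, w⁻ ∈ E⁻, ‖w⁻‖ ≤ ζ‖w⁺‖} and C⁻ := {w = w⁺ + w⁻ : w⁺ ∈ E⁺, w⁻ ∈ E⁻, ‖w⁺‖ ≤ ζ‖w⁻‖} satisfy: (i) T(C⁺) ⊆ C⁺ and T⁻¹(C⁻) ⊆ C⁻; (ii) ‖T^n w‖ ≥ θ^{−n}‖w‖ for every w ∈ C⁺ and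 every n ≥ 1; (iii) ‖T^n w‖ ≤ θ^n ‖w‖ whenever w ∈ ℝ^d satisfies T^j w ∈ C⁻ for every 0 ≤ j ≤ n. -/
/-!
In a narrow cone around `E⁺` the component `w⁺` dominates, `(1 - ζ)‖w⁺‖ ≤ ‖w‖ ≤ (1 + ζ)‖w⁺‖`, so
`T` acts on the norm of `w` as it does on the norm of `w⁺`, up to the factor `(1 + ζ) / (1 - ζ)`.
This factor tends to `1` as `ζ → 0⁺`, hence every rate strictly weaker than `λ` is attained for
small `ζ`; the same holds around `E⁻`, and the bounds for `T^n` follow by multiplying one-step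
bounds along the orbit. The cones are invariant because the splitting is dominated: `T` stretches
`E⁺` at least as much as `E⁻`, so the ratio `‖w⁻‖ / ‖w⁺‖` is non-increasing under `T`.
-/

noncomputable section

/-- The cone `{w = a + b : a ∈ E₁, b ∈ E₂, ‖b‖ ≤ ζ‖a‖}` associated to a pair of
subspaces of `ℝ^d` and a width `ζ`. -/
def cone {d : ℕ} (E₁ E₂ : Submodule ℝ (EuclideanSpace ℝ (Fin d))) (ζ : ℝ) :
    Set (EuclideanSpace ℝ (Fin d)) :=
  {w | ∃ a ∈ E₁, ∃ b ∈ E₂, w = a + b ∧ ‖b‖ ≤ ζ * ‖a‖}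

open Filter Set Topology

section SplitCone

variable {R V W : Type*} [Ring R]
  [SeminormedAddCommGroup V] [Module R V] [SeminormedAddCommGroup W] [Module R W]
  {E₁ E₂ : Submodule R V} {F₁ F₂ : Submodule R W} {α β μ ν ζ : ℝ}

/-- The cone of width `ζ` around `E₁` in `E₁ + E₂`, i.e. `cone` for submodules of an arbitrary
seminormed module. The decomposition of a vector is existentially quantified, hence possibly not
unique when `E₁` and `E₂` intersect. -/
def splitCone (E₁ E₂ : Submodule R V) (ζ : ℝ) : Set V :=
  {w | ∃ a ∈ E₁, ∃ b ∈ E₂, w = a + b ∧ ‖b‖ ≤ ζ * ‖a‖}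

theorem cone_eq_splitCone {d : ℕ} (E₁ E₂ : Submodule ℝ (EuclideanSpace ℝ (Fin d))) (ζ : ℝ) :
    cone E₁ E₂ ζ = splitCone E₁ E₂ ζ :=
  rfl

theorem norm_le_of_add_mem_splitCone (hdisj : Disjoint E₁ E₂) {a b : V} (ha : a ∈ E₁)
    (hb : b ∈ E₂) (hab : a + b ∈ splitCone E₁ E₂ ζ) : ‖b‖ ≤ ζ * ‖a‖ := by
  obtain ⟨a', ha', b', hb', hsum, hle⟩ := hab
  have hsub : a - a' = b' - b := by rwa [sub_eq_sub_iff_add_eq_add, add_comm b']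
  have hzero : a - a' = 0 := Submodule.disjoint_def.mp hdisj _ (E₁.sub_mem ha ha')
    (hsub ▸ E₂.sub_mem hb' hb)
  obtain rfl : a = a' := sub_eq_zero.mp hzero
  obtain rfl : b = b' := add_left_cancel hsum
  exact hle

theorem mapsTo_splitCone (T : V →ₗ[R] W) (hT₁ : MapsTo T E₁ F₁) (hT₂ : MapsTo T E₂ F₂)
    (hα : 0 ≤ α) (hexp : ∀ v ∈ E₁, α * ‖v‖ ≤ ‖T v‖) (hcontr : ∀ v ∈ E₂, ‖T v‖ ≤ α * ‖v‖)
    (hζ : 0 ≤ ζ) : MapsTo T (splitCone E₁ E₂ ζ) (splitCone F₁ F₂ ζ) := by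
  rintro _ ⟨a, ha, b, hb, rfl, hab⟩
  refine ⟨T a, hT₁ ha, T b, hT₂ hb, map_add T a b, ?_⟩
  calc ‖T b‖ ≤ α * ‖b‖ := hcontr b hb
    _ ≤ α * (ζ * ‖a‖) := by gcongr
    _ = ζ * (α * ‖a‖) := by ring
    _ ≤ ζ * ‖T a‖ := by gcongr; exact hexp a ha

theorem mapsTo_symm_splitCone (T : V ≃ₗ[R] W) (hT₁ : MapsTo T.symm F₁ E₁)
    (hT₂ : MapsTo T.symm F₂ E₂) (hα : 0 < α) (hexp : ∀ v ∈ E₁, α * ‖v‖ ≤ ‖T v‖)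
    (hcontr : ∀ v ∈ E₂, ‖T v‖ ≤ α * ‖v‖) (hζ : 0 ≤ ζ) :
    MapsTo T.symm (splitCone F₂ F₁ ζ) (splitCone E₂ E₁ ζ) := by
  have hexp_symm : ∀ v ∈ F₂, α⁻¹ * ‖v‖ ≤ ‖T.symm v‖ := fun v hv => by
    rw [inv_mul_le_iff₀ hα]
    simpa using hcontr _ (hT₂ hv)
  have hcontr_symm : ∀ v ∈ F₁, ‖T.symm v‖ ≤ α⁻¹ * ‖v‖ := fun v hv => by
    rw [le_inv_mul_iff₀ hα]
    simpa using hexp _ (hT₁ hv)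
  exact mapsTo_splitCone (T.symm : W →ₗ[R] V) hT₂ hT₁ (inv_pos.mpr hα).le hexp_symm hcontr_symm hζ

theorem mul_norm_le_norm_map_of_mem_splitCone (T : V →ₗ[R] W) (hα : 0 ≤ α)
    (hexp : ∀ v ∈ E₁, α * ‖v‖ ≤ ‖T v‖) (hcontr : ∀ v ∈ E₂, ‖T v‖ ≤ α * ‖v‖)
    (hμ : 0 ≤ μ) (hμα : μ * (1 + ζ) ≤ α * (1 - ζ)) {w : V} (hw : w ∈ splitCone E₁ E₂ ζ) :
    μ * ‖w‖ ≤ ‖T w‖ := by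
  obtain ⟨a, ha, b, hb, rfl, hab⟩ := hw
  calc μ * ‖a + b‖ ≤ μ * (‖a‖ + ζ * ‖a‖) := by gcongr; exact norm_add_le_of_le le_rfl hab
    _ = μ * (1 + ζ) * ‖a‖ := by ring
    _ ≤ α * (1 - ζ) * ‖a‖ := by gcongr
    _ = α * ‖a‖ - α * (ζ * ‖a‖) := by ring
    _ ≤ α * ‖a‖ - α * ‖b‖ := by gcongr
    _ ≤ ‖T a‖ - ‖T b‖ := sub_le_sub (hexp a ha) (hcontr b hb)
    _ ≤ ‖T a + T b‖ := norm_sub_le_norm_add _ _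
    _ = ‖T (a + b)‖ := by rw [map_add]

theorem norm_map_le_mul_norm_of_mem_splitCone (T : V →ₗ[R] W) (hdisj : Disjoint F₁ F₂)
    (hT₁ : MapsTo T E₁ F₁) (hT₂ : MapsTo T E₂ F₂) (hcontr : ∀ v ∈ E₁, ‖T v‖ ≤ β * ‖v‖)
    (hζ : 0 ≤ ζ) (hν : 0 ≤ ν) (hβν : β * (1 + ζ) ≤ ν * (1 - ζ)) {w : V}
    (hw : w ∈ splitCone E₁ E₂ ζ) (hTw : T w ∈ splitCone F₁ F₂ ζ) : ‖T w‖ ≤ ν * ‖w‖ := by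
  obtain ⟨a, ha, b, hb, rfl, hab⟩ := hw
  rw [map_add] at hTw ⊢
  have hTab : ‖T b‖ ≤ ζ * ‖T a‖ := norm_le_of_add_mem_splitCone hdisj (hT₁ ha) (hT₂ hb) hTw
  calc ‖T a + T b‖ ≤ ‖T a‖ + ζ * ‖T a‖ := norm_add_le_of_le le_rfl hTab
    _ = (1 + ζ) * ‖T a‖ := by ring
    _ ≤ (1 + ζ) * (β * ‖a‖) := by gcongr; exact hcontr a ha
    _ = β * (1 + ζ) * ‖a‖ := by ring
    _ ≤ ν * (1 - ζ) * ‖a‖ := by gcongr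
    _ = ν * (‖a‖ - ζ * ‖a‖) := by ring
    _ ≤ ν * (‖a‖ - ‖b‖) := by gcongr
    _ ≤ ν * ‖a + b‖ := by gcongr; exact norm_sub_le_norm_add _ _

end SplitCone

section Iterate

variable {V : Type*} [Norm V] {f : V → V} {s : Set V} {c : ℝ}

theorem pow_mul_norm_le_norm_iterate (hc : 0 ≤ c) (hs : MapsTo f s s)
    (hf : ∀ w ∈ s, c * ‖w‖ ≤ ‖f w‖) {w : V} (hw : w ∈ s) (n : ℕ) :
    c ^ n * ‖w‖ ≤ ‖f^[n] w‖ :=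
  geom_le (u := fun k => ‖f^[k] w‖) hc n fun k _ => by
    simpa only [Function.iterate_succ_apply'] using hf _ (hs.iterate k hw)

theorem norm_iterate_le_pow_mul_norm (hc : 0 ≤ c)
    (hf : ∀ w ∈ s, f w ∈ s → ‖f w‖ ≤ c * ‖w‖) {w : V} {n : ℕ} (hw : ∀ j ≤ n, f^[j] w ∈ s) :
    ‖f^[n] w‖ ≤ c ^ n * ‖w‖ :=
  le_geom (u := fun k => ‖f^[k] w‖) hc n fun k hk => by
    have hsucc := hw (k + 1) hk
    rw [Function.iterate_succ_apply'] at hsucc ⊢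
    exact hf _ (hw k hk.le) hsucc

end Iterate

theorem eventually_mul_one_add_le_mul_one_sub {x y : ℝ} (hxy : x < y) :
    ∀ᶠ ζ in 𝓝[>] (0 : ℝ), x * (1 + ζ) ≤ y * (1 - ζ) := by
  have hlt : ∀ᶠ ζ in 𝓝 (0 : ℝ), x * (1 + ζ) < y * (1 - ζ) :=
    ContinuousAt.eventually_lt (by fun_prop) (by fun_prop) (by simpa using hxy)
  exact (hlt.filter_mono nhdsWithin_le_nhds).mono fun _ => le_of_lt

theorem hyperbolic_invariant_cones_general {R V : Type*} [Ring R] [SeminormedAddCommGroup V]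
    [Module R V] (T : V ≃ₗ[R] V) {Ep Em : Submodule R V} (hdisj : Disjoint Ep Em)
    (hTp : Ep.map (T : V →ₗ[R] V) = Ep) (hTm : Em.map (T : V →ₗ[R] V) = Em)
    {α β μ ν : ℝ} (hβα : β ≤ α) (hμ : 0 ≤ μ) (hμα : μ < α) (hν : 0 ≤ ν) (hβν : β < ν)
    (hexp : ∀ v ∈ Ep, α * ‖v‖ ≤ ‖T v‖) (hcontr : ∀ v ∈ Em, ‖T v‖ ≤ β * ‖v‖) :
    ∀ᶠ ζ in 𝓝[>] (0 : ℝ),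
      MapsTo T (splitCone Ep Em ζ) (splitCone Ep Em ζ) ∧
      MapsTo T.symm (splitCone Em Ep ζ) (splitCone Em Ep ζ) ∧
      (∀ w ∈ splitCone Ep Em ζ, ∀ n : ℕ, μ ^ n * ‖w‖ ≤ ‖T^[n] w‖) ∧
      (∀ (w : V) (n : ℕ), (∀ j ≤ n, T^[j] w ∈ splitCone Em Ep ζ) → ‖T^[n] w‖ ≤ ν ^ n * ‖w‖) := by
  have hα : 0 < α := hμ.trans_lt hμα
  have hp : MapsTo T Ep Ep := mapsTo_iff_image_subset.mpr hTp.le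
  have hm : MapsTo T Em Em := mapsTo_iff_image_subset.mpr hTm.le
  have hp_symm : MapsTo T.symm Ep Ep :=
    mapsTo_iff_image_subset.mpr ((Submodule.map_symm_eq_iff T).mpr hTp).le
  have hm_symm : MapsTo T.symm Em Em :=
    mapsTo_iff_image_subset.mpr ((Submodule.map_symm_eq_iff T).mpr hTm).le
  have hcontr_α : ∀ v ∈ Em, ‖T v‖ ≤ α * ‖v‖ := fun v hv => (hcontr v hv).trans (by gcongr)
  filter_upwards [self_mem_nhdsWithin, eventually_mul_one_add_le_mul_one_sub hμα,
    eventually_mul_one_add_le_mul_one_sub hβν] with ζ (hζ : 0 < ζ) hμζ hνζ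
  have hcone : MapsTo T (splitCone Ep Em ζ) (splitCone Ep Em ζ) :=
    mapsTo_splitCone (T : V →ₗ[R] V) hp hm hα.le hexp hcontr_α hζ.le
  refine ⟨hcone, mapsTo_symm_splitCone T hp_symm hm_symm hα hexp hcontr_α hζ.le,
    fun w hw => pow_mul_norm_le_norm_iterate hμ hcone (fun v hv => ?_) hw,
    fun w n => norm_iterate_le_pow_mul_norm hν fun v hv hTv => ?_⟩
  · exact mul_norm_le_norm_map_of_mem_splitCone (T : V →ₗ[R] V) hα.le hexp hcontr_α hμ hμζ hv
  · exact norm_map_le_mul_norm_of_mem_splitCone (T : V →ₗ[R] V) hdisj.symm hm hp hcontr hζ.le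
      hν hνζ hv hTv

/-- **Invariant cone fields for hyperbolic linear maps.** Suppose `T : ℝ^d → ℝ^d` is an
invertible linear map, `ℝ^d = E⁺ ⊕ E⁻` with `T`-invariant subspaces, and for some `λ > 1`
the map `T` expands vectors of `E⁺` by at least `λ` and contracts vectors of `E⁻` by at
least `λ⁻¹`. Then there are `θ ∈ (0,1)` and `ζ > 0` such that the cones
`C⁺ = {‖w⁻‖ ≤ ζ‖w⁺‖}` and `C⁻ = {‖w⁺‖ ≤ ζ‖w⁻‖}` satisfy: (i) `T(C⁺) ⊆ C⁺` and
`T⁻¹(C⁻) ⊆ C⁻`; (ii) `‖T^n w‖ ≥ θ^{-n}‖w‖` for `w ∈ C⁺` and `n ≥ 1`; (iii)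
`‖T^n w‖ ≤ θ^n ‖w‖` whenever `T^j w ∈ C⁻` for all `0 ≤ j ≤ n`. -/
theorem hyperbolic_invariant_cones (d : ℕ)
    (T : EuclideanSpace ℝ (Fin d) ≃ₗ[ℝ] EuclideanSpace ℝ (Fin d))
    (Ep Em : Submodule ℝ (EuclideanSpace ℝ (Fin d)))
    (hcompl : IsCompl Ep Em)
    (hTp : Submodule.map (T : EuclideanSpace ℝ (Fin d) →ₗ[ℝ] EuclideanSpace ℝ (Fin d)) Ep = Ep)
    (hTm : Submodule.map (T : EuclideanSpace ℝ (Fin d) →ₗ[ℝ] EuclideanSpace ℝ (Fin d)) Em = Em)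
    (lam : ℝ) (hlam : 1 < lam)
    (hexp : ∀ v ∈ Ep, lam * ‖v‖ ≤ ‖T v‖)
    (hcontr : ∀ v ∈ Em, ‖T v‖ ≤ lam⁻¹ * ‖v‖) :
    ∃ θ : ℝ, θ ∈ Set.Ioo (0 : ℝ) 1 ∧ ∃ ζ : ℝ, 0 < ζ ∧
      (∀ w ∈ cone Ep Em ζ, T w ∈ cone Ep Em ζ) ∧
      (∀ w ∈ cone Em Ep ζ, T.symm w ∈ cone Em Ep ζ) ∧
      (∀ w ∈ cone Ep Em ζ, ∀ n : ℕ, 1 ≤ n → θ ^ (-(n : ℤ)) * ‖w‖ ≤ ‖(⇑T)^[n] w‖) ∧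
      (∀ (w : EuclideanSpace ℝ (Fin d)) (n : ℕ),
        (∀ j ≤ n, (⇑T)^[j] w ∈ cone Em Ep ζ) → ‖(⇑T)^[n] w‖ ≤ θ ^ n * ‖w‖) := by
  have hlam0 : 0 < lam := one_pos.trans hlam
  obtain ⟨θ, hθ, hθ1⟩ := exists_between (inv_lt_one_of_one_lt₀ hlam)
  have hθ0 : 0 < θ := (inv_pos.mpr hlam0).trans hθ
  have hcones := hyperbolic_invariant_cones_general T hcompl.disjoint hTp hTm
    ((inv_lt_one_of_one_lt₀ hlam).trans hlam).le (inv_pos.mpr hθ0).le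
    (inv_lt_of_inv_lt₀ hlam0 hθ) hθ0.le hθ hexp hcontr
  obtain ⟨ζ, ⟨hforward, hbackward, hgrowth, hdecay⟩, hζ⟩ :=
    (hcones.and self_mem_nhdsWithin).exists
  simp only [cone_eq_splitCone]
  exact ⟨θ, ⟨hθ0, hθ1⟩, ζ, hζ, hforward, hbackward,
    fun w hw n _ => by simpa only [zpow_neg, zpow_natCast, inv_pow] using hgrowth w hw n, hdecay⟩

end
end

section
/- Let d ≥ 2, κ ≥ 1, let Σ̂_κ := {1,…,κ}^ℤ with the product topology and left shift σ, and let A : Σ̂_κ → SL(d,ℝ) be continuous. Write A⁽ⁿ⁾(ω) := A(σ^{n−1}(ω)) ⋯ A(σ(ω)) A(ω), and consider the skew product P_A : Σ̂_κ × S^{d−1} → Σ̂_κ × S^{d−1}, P_A(ω,v) = (σ(ω), A(ω)v/‖A(ω)v‖), on the unit sphere S^{d−1} ⊂ ℝ^d (the double cover of the projective space), together with the continuous observable φ_A(ω,v) := log ‖A(ω)v‖. Let ν be a σ-invariant ergodic Borel probability measure on Σ̂_κ, and suppose (1/n) ∫ log ‖A⁽ⁿ⁾(ω)‖ dν(ω)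 → λ as n → ∞, where ‖·‖ denotes the operator norm (so λ = λ₊(A,ν) is the top Lyapunov exponent of A with respect to ν). Then there exists a P_A-invariant ergodic Borel probability measure μ on Σ̂_κ × S^{d−1} such that the pushforward of μ under the first-coordinate projection equals ν and ∫ φ_A dμ = λ. -/
/-!
The measures on `Ω × S^{d-1}` that are invariant under the skew product and project to `ν` form a
compact set. Birkhoff sums of `φ_A` are `log ‖A⁽ⁿ⁾(ω)v‖ ≤ log ‖A⁽ⁿ⁾(ω)‖`, so every such measure
satisfies `∫ φ_A ≤ λ`. Equality is attained: choose measurably unit vectors `v_n(ω)` that are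
stretched by `A⁽ⁿ⁾(ω)` by at least `‖A⁽ⁿ⁾(ω)‖ / 2`, and average the image of `ν` under
`ω ↦ (ω, v_n(ω))` over the first `n` steps of the orbit; any limit measure has `∫ φ_A = λ`
(Krylov–Bogolyubov). Hence `∫ φ_A` attains its maximum `λ` over the compact set, also at an
extreme point, and since `ν` is ergodic, extreme points are ergodic.
-/

open Filter Topology Metric MeasureTheory

noncomputable section

/-- The action of a `d × d` real matrix on Euclidean space `ℝ^d`. -/
def mvec {d : ℕ} (B : Matrix (Fin d) (Fin d) ℝ) (v : EuclideanSpace ℝ (Fin d)) :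
    EuclideanSpace ℝ (Fin d) :=
  Matrix.toEuclideanLin B v

lemma mvec_ne_zero {d : ℕ} (B : Matrix.SpecialLinearGroup (Fin d) ℝ)
    {v : EuclideanSpace ℝ (Fin d)} (hv : v ≠ 0) :
    mvec (B : Matrix (Fin d) (Fin d) ℝ) v ≠ 0 := by
  intro h
  apply hv
  have hinj : Function.Injective ((B : Matrix (Fin d) (Fin d) ℝ)).mulVec := by
    refine Matrix.mulVec_injective_iff_isUnit.2 ?_
    rw [Matrix.isUnit_iff_isUnit_det, Matrix.SpecialLinearGroup.det_coe]
    exact isUnit_one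
  have h' : (B : Matrix (Fin d) (Fin d) ℝ).mulVec
      ((WithLp.equiv 2 (Fin d → ℝ)) v) = 0 := by
    have := congrArg (WithLp.equiv 2 (Fin d → ℝ)) h
    rw [mvec, Matrix.toEuclideanLin_apply] at this
    simpa using this
  have hv0 : (WithLp.equiv 2 (Fin d → ℝ)) v = 0 := by
    apply hinj
    rw [h', Matrix.mulVec_zero]
  have := congrArg (WithLp.equiv 2 (Fin d → ℝ)).symm hv0
  simpa using this

/-- The left shift on the two-sided sequence space `Σ̂_κ = {1,…,κ}^ℤ`. -/
def shiftZ {κ : ℕ} (ω : ℤ → Fin κ) : ℤ → Fin κ := fun n => ω (n + 1)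

/-- The cocycle product `A⁽ⁿ⁾(ω) = A(σ^{n-1}(ω)) ⋯ A(σ(ω)) A(ω)`. -/
def cocycleProdZ {d κ : ℕ} (A : (ℤ → Fin κ) → Matrix.SpecialLinearGroup (Fin d) ℝ)
    (ω : ℤ → Fin κ) : ℕ → Matrix.SpecialLinearGroup (Fin d) ℝ
  | 0 => 1
  | n + 1 => A (shiftZ^[n] ω) * cocycleProdZ A ω n

/-- The unit sphere `S^{d-1} ⊆ ℝ^d` (as a type), a double cover of the projective space. -/
abbrev sphType (d : ℕ) : Type :=
  ↥(Metric.sphere (0 : EuclideanSpace ℝ (Fin d)) 1)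

/-- The projectivized skew product `P_A(ω,v) = (σ(ω), A(ω)v / ‖A(ω)v‖)` on
`Σ̂_κ × S^{d-1}`. -/
def projSkew {d κ : ℕ} (A : (ℤ → Fin κ) → Matrix.SpecialLinearGroup (Fin d) ℝ)
    (p : (ℤ → Fin κ) × sphType d) : (ℤ → Fin κ) × sphType d :=
  (shiftZ p.1,
    ⟨‖mvec (A p.1 : Matrix (Fin d) (Fin d) ℝ) (p.2 : EuclideanSpace ℝ (Fin d))‖⁻¹ •
        mvec (A p.1 : Matrix (Fin d) (Fin d) ℝ) (p.2 : EuclideanSpace ℝ (Fin d)), by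
      rw [mem_sphere_zero_iff_norm]
      refine norm_smul_inv_norm (mvec_ne_zero _ ?_)
      have hs := p.2.2
      rw [mem_sphere_zero_iff_norm] at hs
      intro h0
      rw [h0, norm_zero] at hs
      exact zero_ne_one hs⟩)

/-- The continuous observable `φ_A(ω,v) = log ‖A(ω)v‖` on `Σ̂_κ × S^{d-1}`. -/
def phiA {d κ : ℕ} (A : (ℤ → Fin κ) → Matrix.SpecialLinearGroup (Fin d) ℝ)
    (p : (ℤ → Fin κ) × sphType d) : ℝ :=
  Real.log ‖mvec (A p.1 : Matrix (Fin d) (Fin d) ℝ) (p.2 : EuclideanSpace ℝ (Fin d))‖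

lemma integrable_of_continuous_of_compactSpace {X E : Type*} [TopologicalSpace X] [CompactSpace X]
    [MeasurableSpace X] [OpensMeasurableSpace X] [NormedAddCommGroup E]
    {f : X → E} (hf : Continuous f) (m : Measure X) [IsFiniteMeasureOnCompacts m] :
    Integrable f m :=
  hf.integrable_of_hasCompactSupport (.of_compactSpace f)

lemma continuous_birkhoffAverage {X E : Type*} [TopologicalSpace X] [AddCommMonoid E]
    [TopologicalSpace E] [ContinuousAdd E] [Module ℝ E] [ContinuousConstSMul ℝ E] {T : X → X}
    (hT : Continuous T) {f : X → E} (hf : Continuous f) (n : ℕ) :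
    Continuous (birkhoffAverage ℝ T f n) :=
  (continuous_finsetSum _ fun k _ => hf.comp (hT.iterate k)).const_smul _

lemma exists_measurable_selection_of_isOpen {X Y : Type*} [MeasurableSpace X] [TopologicalSpace Y]
    [TopologicalSpace.SeparableSpace Y] [MeasurableSpace Y] {U : X → Set Y}
    (hU : ∀ x, IsOpen (U x)) (hne : ∀ x, (U x).Nonempty)
    (hmeas : ∀ y, MeasurableSet {x | y ∈ U x}) : ∃ v : X → Y, Measurable v ∧ ∀ x, v x ∈ U x := by
  classical
  cases isEmpty_or_nonempty X with
  | inl _ => exact ⟨isEmptyElim, measurable_of_empty _, isEmptyElim⟩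
  | inr hX =>
    have : Nonempty Y := (hne hX.some).to_type
    have hdense (x : X) : ∃ k, TopologicalSpace.denseSeq Y k ∈ U x :=
      (TopologicalSpace.denseRange_denseSeq Y).exists_mem_open (hU x) (hne x)
    exact ⟨fun x => TopologicalSpace.denseSeq Y (Nat.find (hdense x)),
      measurable_from_nat.comp (measurable_find hdense fun k => hmeas _),
      fun x => Nat.find_spec (hdense x)⟩

section OrbitAverage

open scoped ENNReal

variable {X Y : Type*} [MeasurableSpace X] [MeasurableSpace Y] {T : X → X} {m : Measure X}

/-- The average `n⁻¹ ∑_{k < n} (T^k)_* m` of the push-forwards of `m` along an orbit segment,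
dual to the Birkhoff averages of functions. For `n = 0` it is the zero measure. -/
def orbitAverage (T : X → X) (m : Measure X) (n : ℕ) : Measure X :=
  (n : ℝ≥0∞)⁻¹ • ∑ k ∈ Finset.range n, m.map T^[k]

lemma isProbabilityMeasure_orbitAverage (hT : Measurable T) (m : Measure X)
    [IsProbabilityMeasure m] {n : ℕ} (hn : n ≠ 0) : IsProbabilityMeasure (orbitAverage T m n) := by
  have hmass (k : ℕ) : m.map T^[k] Set.univ = 1 :=
    (Measure.isProbabilityMeasure_map (hT.iterate k).aemeasurable).measure_univ
  constructor
  simp only [orbitAverage, Measure.smul_apply, Measure.finsetSum_apply, hmass, Finset.sum_const,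
    Finset.card_range, nsmul_one, smul_eq_mul]
  exact ENNReal.inv_mul_cancel (by exact_mod_cast hn) (ENNReal.natCast_ne_top n)

lemma map_orbitAverage {S : Y → Y} {π : X → Y} (hT : Measurable T) (hS : Measurable S)
    (hπ : Measurable π) (h : Function.Semiconj π T S) (m : Measure X) (n : ℕ) :
    (orbitAverage T m n).map π = orbitAverage S (m.map π) n := by
  rw [orbitAverage, orbitAverage, Measure.map_smul, Measure.map_finset_sum hπ.aemeasurable]
  congr! 2 with k
  rw [Measure.map_map hπ (hT.iterate k), Measure.map_map (hS.iterate k) hπ,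
    (h.iterate_right k).comp_eq]

lemma orbitAverage_of_measurePreserving (hm : MeasurePreserving T m m) {n : ℕ} (hn : n ≠ 0) :
    orbitAverage T m n = m := by
  simp only [orbitAverage, (hm.iterate _).map_eq, Finset.sum_const, Finset.card_range]
  rw [← Nat.cast_smul_eq_nsmul ℝ≥0∞, smul_smul,
    ENNReal.inv_mul_cancel (by exact_mod_cast hn) (ENNReal.natCast_ne_top n), one_smul]

section Integral

variable {E : Type*} [NormedAddCommGroup E] [NormedSpace ℝ E] {f : X → E}

lemma integral_orbitAverage (hT : Measurable T) (hf : ∀ k, Integrable f (m.map T^[k])) (n : ℕ) :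
    ∫ x, f x ∂orbitAverage T m n = ∫ x, birkhoffAverage ℝ T f n x ∂m := by
  simp only [birkhoffAverage, birkhoffSum]
  rw [orbitAverage, integral_smul_measure, integral_finsetSum_measure fun k _ => hf k,
    integral_smul, integral_finsetSum (f := fun k x => f (T^[k] x)) _ fun k _ =>
      (hf k).comp_measurable (hT.iterate k)]
  congr 1
  · simp
  · exact Finset.sum_congr rfl fun k _ =>
      integral_map (hT.iterate k).aemeasurable (hf k).aestronglyMeasurable

lemma integral_birkhoffAverage (hm : MeasurePreserving T m m) (hf : Integrable f m) {n : ℕ}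
    (hn : n ≠ 0) : ∫ x, birkhoffAverage ℝ T f n x ∂m = ∫ x, f x ∂m := by
  rw [← integral_orbitAverage hm.measurable fun k => by rwa [(hm.iterate k).map_eq],
    orbitAverage_of_measurePreserving hm hn]

end Integral

lemma abs_integral_comp_sub_integral_orbitAverage_le [IsProbabilityMeasure m] (hT : Measurable T)
    {f : X → ℝ} (hf : Measurable f) {C : ℝ} (hC : ∀ x, |f x| ≤ C) (n : ℕ) :
    |∫ x, f (T x) ∂orbitAverage T m n - ∫ x, f x ∂orbitAverage T m n| ≤ 2 * C / n := by
  have hint {g : X → ℝ} (hg : Measurable g) (hgC : ∀ x, |g x| ≤ C) (μ : Measure X)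
      [IsFiniteMeasure μ] : Integrable g μ :=
    .of_bound hg.aestronglyMeasurable C (ae_of_all _ hgC)
  have hbirk {g : X → ℝ} (hg : Measurable g) (hgC : ∀ x, |g x| ≤ C) :
      Integrable (birkhoffAverage ℝ T g n) m :=
    (integrable_finsetSum (f := fun k x => g (T^[k] x)) _ fun k _ =>
      hint (hg.comp (hT.iterate k)) (fun x => hgC _) m).smul (n : ℝ)⁻¹
  have htelescope (x : X) : |birkhoffAverage ℝ T (fun y => f (T y)) n x -
      birkhoffAverage ℝ T f n x| ≤ 2 * C / n := by
    have hcomm : birkhoffAverage ℝ T (fun y => f (T y)) n x = birkhoffAverage ℝ T f n (T x) := by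
      simp only [birkhoffAverage, birkhoffSum, Function.Commute.iterate_self _ _ _]
    rw [hcomm, birkhoffAverage_apply_sub_birkhoffAverage, smul_eq_mul, abs_mul, abs_inv,
      Nat.abs_cast, inv_mul_eq_div]
    gcongr
    linarith [abs_sub (f (T^[n] x)) (f x), hC (T^[n] x), hC x]
  rw [integral_orbitAverage (f := fun x => f (T x)) hT fun k => hint (hf.comp hT) (fun x => hC _) _,
    integral_orbitAverage hT fun k => hint hf hC _,
    ← integral_sub (hbirk (g := fun x => f (T x)) (hf.comp hT) fun x => hC _) (hbirk hf hC)]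
  simpa using norm_integral_le_of_norm_le_const (μ := m) (C := 2 * C / n)
    (ae_of_all m fun x => (Real.norm_eq_abs _).trans_le (htelescope x))

end OrbitAverage

section MaximalExtremePoint

open scoped ENNReal

lemma exists_mem_extremePoints_forall_le {E : Type*} [AddCommGroup E] [Module ℝ E]
    [TopologicalSpace E] [T2Space E] [IsTopologicalAddGroup E] [ContinuousSMul ℝ E]
    [LocallyConvexSpace ℝ E] {K : Set E} (hK : IsCompact K) (hne : K.Nonempty)
    (l : StrongDual ℝ E) : ∃ x ∈ K.extremePoints ℝ, ∀ y ∈ K, l y ≤ l x := by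
  have hface : IsExposed ℝ K (l.toExposed K) := ContinuousLinearMap.toExposed.isExposed
  obtain ⟨x, hx⟩ := (hface.isCompact hK).extremePoints_nonempty
    (hK.exists_isMaxOn hne l.continuous.continuousOn)
  exact ⟨x, hface.isExtreme.extremePoints_subset_extremePoints hx, hx.1.2⟩

variable {X : Type*} [MeasurableSpace X] [TopologicalSpace X] [BorelSpace X]
  [HasOuterApproxClosed X]

lemma measure_ext_of_forall_integral_continuousMap {μ ν : Measure X} [IsFiniteMeasure μ]
    [IsFiniteMeasure ν] (h : ∀ f : C(X, ℝ), ∫ x, f x ∂μ = ∫ x, f x ∂ν) : μ = ν :=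
  ext_of_forall_integral_eq_of_IsFiniteMeasure fun f => h f.toContinuousMap

lemma exists_mem_extremePoints_integral_le [CompactSpace X] {K : Set (ProbabilityMeasure X)}
    (hK : IsCompact K) (hne : K.Nonempty) (φ : C(X, ℝ)) :
    ∃ μ ∈ K, (μ : Measure X) ∈ Set.extremePoints ℝ≥0∞ ((↑) '' K) ∧
      ∀ μ' ∈ K, ∫ x, φ x ∂(μ' : Measure X) ≤ ∫ x, φ x ∂(μ : Measure X) := by
  -- An affine embedding of the measures into a locally convex space.
  let I : ProbabilityMeasure X → C(X, ℝ) → ℝ := fun μ f => ∫ x, f x ∂(μ : Measure X)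
  have hI : Continuous I := continuous_pi ProbabilityMeasure.continuous_integral_continuousMap
  obtain ⟨_, ⟨⟨μ, hμ, rfl⟩, hext⟩, hmax⟩ := exists_mem_extremePoints_forall_le (hK.image hI)
    (hne.image I) (ContinuousLinearMap.proj φ)
  refine ⟨μ, hμ, ⟨Set.mem_image_of_mem _ hμ, ?_⟩, fun μ' hμ' => hmax _ (Set.mem_image_of_mem I hμ')⟩
  rintro _ ⟨μ₁, h₁, rfl⟩ _ ⟨μ₂, h₂, rfl⟩ ⟨a, b, ha, hb, hab, hsum⟩
  have ha' : a ≠ ∞ := ne_top_of_le_ne_top ENNReal.one_ne_top (hab ▸ le_self_add)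
  have hb' : b ≠ ∞ := ne_top_of_le_ne_top ENNReal.one_ne_top (hab ▸ le_add_self)
  have hseg : I μ ∈ openSegment ℝ (I μ₁) (I μ₂) := by
    refine ⟨a.toReal, b.toReal, ENNReal.toReal_pos ha.ne' ha', ENNReal.toReal_pos hb.ne' hb',
      by rw [← ENNReal.toReal_add ha' hb', hab, ENNReal.toReal_one], funext fun f => ?_⟩
    have hf (ρ : ProbabilityMeasure X) : Integrable f (ρ : Measure X) :=
      integrable_of_continuous_of_compactSpace f.continuous _
    simp only [I, Pi.add_apply, Pi.smul_apply]
    rw [← hsum, integral_add_measure ((hf μ₁).smul_measure ha') ((hf μ₂).smul_measure hb'),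
      integral_smul_measure, integral_smul_measure]
  exact measure_ext_of_forall_integral_continuousMap fun f =>
    congrFun (hext (Set.mem_image_of_mem I h₁) (Set.mem_image_of_mem I h₂) hseg) f

end MaximalExtremePoint

section InvariantLifts

open scoped ENNReal

variable {X Y : Type*} [MeasurableSpace X] [MeasurableSpace Y] {T : X → X} {S : Y → Y} {π : X → Y}
  {ν : Measure Y}

/-- The `T`-invariant measures on `X` that project to `ν` under `π`. They are probability measures
if `ν` is one. -/
def invariantLifts (T : X → X) (π : X → Y) (ν : Measure Y) : Set (Measure X) :=
  {μ | MeasurePreserving T μ μ ∧ MeasurePreserving π μ ν}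

lemma isProbabilityMeasure_of_measurePreserving [IsProbabilityMeasure ν] {μ : Measure X}
    (h : MeasurePreserving π μ ν) : IsProbabilityMeasure μ :=
  have : IsProbabilityMeasure (μ.map π) := h.map_eq ▸ inferInstance
  Measure.isProbabilityMeasure_of_map π

-- Since `μ ↦ μ.map π` is affine, this is the extremality of `ν` among the invariant measures.
lemma isExtreme_invariantLifts (hπ : Measurable π) (h : Function.Semiconj π T S)
    (hν : Ergodic S ν) [IsProbabilityMeasure ν] :
    IsExtreme ℝ≥0∞ {μ | MeasurePreserving T μ μ ∧ IsProbabilityMeasure μ}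
      (invariantLifts T π ν) where
  subset μ hμ := ⟨hμ.1, isProbabilityMeasure_of_measurePreserving hμ.2⟩
  left_mem_of_mem_openSegment := by
    rintro μ₁ ⟨hT₁, hp₁⟩ μ₂ ⟨hT₂, hp₂⟩ μ hμ ⟨a, b, ha, hb, hab, rfl⟩
    have hproj {ρ : Measure X} (hρ : MeasurePreserving T ρ ρ) [IsProbabilityMeasure ρ] :
        MeasurePreserving S (ρ.map π) (ρ.map π) ∧ IsProbabilityMeasure (ρ.map π) :=
      ⟨(hπ.measurePreserving ρ).of_semiconj hρ h hν.measurable,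
        Measure.isProbabilityMeasure_map hπ.aemeasurable⟩
    refine ⟨hT₁, hπ, hν.mem_extremePoints.2 (hproj hT₁) (hproj hT₂) ⟨a, b, ha, hb, hab, ?_⟩⟩
    rw [← hμ.2.map_eq, Measure.map_add _ _ hπ, Measure.map_smul, Measure.map_smul]

lemma ergodic_of_mem_extremePoints_invariantLifts (hπ : Measurable π)
    (h : Function.Semiconj π T S) (hν : Ergodic S ν) [IsProbabilityMeasure ν] {μ : Measure X}
    (hμ : μ ∈ (invariantLifts T π ν).extremePoints ℝ≥0∞) : Ergodic T μ :=
  .of_mem_extremePoints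
    ((isExtreme_invariantLifts hπ h hν).extremePoints_subset_extremePoints hμ)

lemma isClosed_setOf_measurePreserving_right [TopologicalSpace X] [OpensMeasurableSpace X]
    [TopologicalSpace Y] [BorelSpace Y] [HasOuterApproxClosed Y] (hπ : Continuous π)
    (ν : Measure Y) [IsProbabilityMeasure ν] :
    IsClosed {μ : ProbabilityMeasure X | MeasurePreserving π (μ : Measure X) ν} := by
  let ν' : ProbabilityMeasure Y := ⟨ν, inferInstance⟩
  convert isClosed_eq (ProbabilityMeasure.continuous_map hπ) (continuous_const (y := ν')) using 2
  exact Set.ext fun μ => ⟨fun hμ => Subtype.ext hμ.map_eq,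
    fun hμ => ⟨hπ.measurable, congrArg Subtype.val hμ⟩⟩

lemma measurePreserving_of_tendsto_orbitAverage [TopologicalSpace X] [CompactSpace X]
    [BorelSpace X] [HasOuterApproxClosed X] (hT : Continuous T) {ι : Type*} {L : Filter ι}
    [L.NeBot] {N : ι → ℕ} (hN : Tendsto N L atTop) {m : ι → Measure X}
    [∀ i, IsProbabilityMeasure (m i)] {p : ι → ProbabilityMeasure X}
    (hp : ∀ i, (p i : Measure X) = orbitAverage T (m i) (N i)) {μ : ProbabilityMeasure X}
    (hμ : Tendsto p L (𝓝 μ)) : MeasurePreserving T (μ : Measure X) μ := by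
  have : IsProbabilityMeasure ((μ : Measure X).map T) :=
    Measure.isProbabilityMeasure_map hT.measurable.aemeasurable
  refine ⟨hT.measurable, measure_ext_of_forall_integral_continuousMap fun f => ?_⟩
  have hlim (g : C(X, ℝ)) :=
    ((ProbabilityMeasure.continuous_integral_continuousMap g).tendsto μ).comp hμ
  have hbound (i : ι) : |∫ x, f (T x) ∂(p i : Measure X) - ∫ x, f x ∂(p i : Measure X)| ≤
      2 * ‖f‖ / N i := by
    rw [hp i]
    exact abs_integral_comp_sub_integral_orbitAverage_le hT.measurable f.continuous.measurable
      f.norm_coe_le_norm _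
  have hrate : Tendsto (fun i => 2 * ‖f‖ / (N i : ℝ)) L (𝓝 0) :=
    (tendsto_natCast_atTop_atTop.comp hN).const_div_atTop _
  rw [integral_map hT.measurable.aemeasurable f.continuous.aestronglyMeasurable]
  exact sub_eq_zero.1 (tendsto_nhds_unique ((hlim (f.comp ⟨T, hT⟩)).sub (hlim f))
    (squeeze_zero_norm hbound hrate))

variable [TopologicalSpace X] [CompactSpace X] [T2Space X] [BorelSpace X] [HasOuterApproxClosed X]
  [TopologicalSpace Y] [BorelSpace Y] [HasOuterApproxClosed Y]

lemma isCompact_setOf_mem_invariantLifts (hT : Continuous T) (hπ : Continuous π) (ν : Measure Y)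
    [IsProbabilityMeasure ν] :
    IsCompact {μ : ProbabilityMeasure X | (μ : Measure X) ∈ invariantLifts T π ν} := by
  have hinv : IsClosed {μ : ProbabilityMeasure X | MeasurePreserving T (μ : Measure X) μ} := by
    convert isClosed_eq (ProbabilityMeasure.continuous_map hT) continuous_id using 2
    exact Set.ext fun μ => ⟨fun hμ => Subtype.ext hμ.map_eq,
      fun hμ => ⟨hT.measurable, congrArg Subtype.val hμ⟩⟩
  exact (hinv.inter (isClosed_setOf_measurePreserving_right hπ ν)).isCompact

lemma exists_ergodic_mem_invariantLifts_integral_le (hT : Continuous T) (hπ : Continuous π)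
    (h : Function.Semiconj π T S) [IsProbabilityMeasure ν] (hν : Ergodic S ν)
    (hne : (invariantLifts T π ν).Nonempty) (φ : C(X, ℝ)) :
    ∃ μ ∈ invariantLifts T π ν, Ergodic T μ ∧
      ∀ μ' ∈ invariantLifts T π ν, ∫ x, φ x ∂μ' ≤ ∫ x, φ x ∂μ := by
  let K : Set (ProbabilityMeasure X) := {μ | (μ : Measure X) ∈ invariantLifts T π ν}
  have hlift {μ : Measure X} (hμ : μ ∈ invariantLifts T π ν) : ∃ μ' ∈ K, (μ' : Measure X) = μ :=
    ⟨⟨μ, isProbabilityMeasure_of_measurePreserving hμ.2⟩, hμ, rfl⟩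
  have hK : ((↑) '' K : Set (Measure X)) = invariantLifts T π ν :=
    Set.Subset.antisymm (by rintro _ ⟨μ, hμ, rfl⟩; exact hμ) fun μ hμ => hlift hμ
  obtain ⟨μ, hμ, hext, hmax⟩ := exists_mem_extremePoints_integral_le
    (isCompact_setOf_mem_invariantLifts hT hπ ν) (Set.image_nonempty.1 (hK ▸ hne)) φ
  refine ⟨μ, hμ, ergodic_of_mem_extremePoints_invariantLifts hπ.measurable h hν (hK ▸ hext),
    fun ρ hρ => ?_⟩
  obtain ⟨ρ, hρK, rfl⟩ := hlift hρ
  exact hmax ρ hρK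

/-- The Krylov–Bogolyubov argument, relative to the factor `π` and keeping track of `φ`. -/
lemma exists_mem_invariantLifts_integral_eq (hT : Continuous T) (hπ : Continuous π)
    (h : Function.Semiconj π T S) [IsProbabilityMeasure ν] (hν : MeasurePreserving S ν ν)
    {m : ℕ → Measure X} (hm : ∀ n, MeasurePreserving π (m n) ν) (φ : C(X, ℝ)) {c : ℝ}
    (hc : Tendsto (fun n => ∫ x, birkhoffAverage ℝ T φ n x ∂m n) atTop (𝓝 c)) :
    ∃ μ ∈ invariantLifts T π ν, ∫ x, φ x ∂μ = c := by
  have (n : ℕ) : IsProbabilityMeasure (m n) := isProbabilityMeasure_of_measurePreserving (hm n)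
  let p : ℕ → ProbabilityMeasure X := fun n => ⟨orbitAverage T (m (n + 1)) (n + 1),
    isProbabilityMeasure_orbitAverage hT.measurable _ n.succ_ne_zero⟩
  have hpπ (n : ℕ) : MeasurePreserving π (p n : Measure X) ν := by
    refine ⟨hπ.measurable, ?_⟩
    exact (map_orbitAverage hT.measurable hν.measurable hπ.measurable h _ _).trans <| by
      rw [(hm _).map_eq, orbitAverage_of_measurePreserving hν n.succ_ne_zero]
  have hpφ (n : ℕ) : ∫ x, φ x ∂(p n : Measure X) =
      ∫ x, birkhoffAverage ℝ T φ (n + 1) x ∂m (n + 1) :=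
    integral_orbitAverage hT.measurable
      (fun _ => integrable_of_continuous_of_compactSpace φ.continuous _) _
  obtain ⟨μ, -, hμ⟩ := isCompact_univ.ultrafilter_le_nhds ((hyperfilter ℕ).map p) (by simp)
  have hshift : Tendsto (· + 1) (hyperfilter ℕ : Filter ℕ) atTop :=
    (tendsto_add_atTop_nat 1).mono_left Nat.hyperfilter_le_atTop
  refine ⟨μ, ⟨measurePreserving_of_tendsto_orbitAverage hT hshift (fun _ => rfl) hμ,
    (isClosed_setOf_measurePreserving_right hπ ν).mem_of_tendsto hμ (.of_forall hpπ)⟩, ?_⟩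
  refine tendsto_nhds_unique
    (((ProbabilityMeasure.continuous_integral_continuousMap φ).tendsto μ).comp hμ) ?_
  exact (hc.comp hshift).congr fun n => (hpφ n).symm

end InvariantLifts

section UnitSphere

variable {E F : Type*} [NormedAddCommGroup E] [NormedSpace ℝ E] [NormedAddCommGroup F]
  [NormedSpace ℝ F]

lemma norm_apply_sphere_pos {B : E →L[ℝ] F} (hB : Function.Injective B)
    (v : sphere (0 : E) 1) : 0 < ‖B v‖ :=
  norm_pos_iff.2 <| (map_ne_zero_iff _ hB).2 (ne_zero_of_mem_unit_sphere v)

lemma norm_apply_sphere_le (B : E →L[ℝ] F) (v : sphere (0 : E) 1) : ‖B v‖ ≤ ‖B‖ :=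
  B.unit_le_opNorm v (norm_eq_of_mem_sphere v).le

lemma exists_sphere_opNorm_lt_two_mul {B : E →L[ℝ] F} (hB : B ≠ 0) :
    ∃ v : sphere (0 : E) 1, ‖B‖ < 2 * ‖B v‖ := by
  obtain ⟨v, hv, hlt⟩ := B.exists_nnnorm_eq_one_lt_apply_of_lt_opNNNorm
    (NNReal.half_lt_self (nnnorm_ne_zero_iff.2 hB))
  refine ⟨⟨v, mem_sphere_zero_iff_norm.2 (congrArg NNReal.toReal hv)⟩, ?_⟩
  exact (div_lt_iff₀' two_pos).1 (show ‖B‖ / 2 < ‖B v‖ from hlt)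

end UnitSphere

section LinearCocycle

variable {Ω E : Type*} [NormedAddCommGroup E] [NormedSpace ℝ E] {S : Ω → Ω} {A : Ω → E →L[ℝ] E}

/-- The product `A⁽ⁿ⁾(ω) = A(S^{n-1} ω) ⋯ A(S ω) A(ω)` of a linear cocycle `A` over `S`. -/
def linearCocycle (S : Ω → Ω) (A : Ω → E →L[ℝ] E) (ω : Ω) : ℕ → E →L[ℝ] E
  | 0 => 1
  | n + 1 => A (S^[n] ω) * linearCocycle S A ω n

/-- The skew product `(ω, v) ↦ (S ω, A(ω)v / ‖A(ω)v‖)` induced by a linear cocycle on the unit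
sphere. -/
def sphereSkewProduct (S : Ω → Ω) (A : Ω → E →L[ℝ] E) (hinj : ∀ ω, Function.Injective (A ω))
    (p : Ω × sphere (0 : E) 1) : Ω × sphere (0 : E) 1 :=
  (S p.1, ⟨‖A p.1 p.2‖⁻¹ • A p.1 p.2, mem_sphere_zero_iff_norm.2 <| norm_smul_inv_norm <|
    (map_ne_zero_iff _ (hinj p.1)).2 (ne_zero_of_mem_unit_sphere p.2)⟩)

/-- The logarithmic expansion `log ‖A(ω)v‖` of the unit vector `v` under one step of the linear
cocycle `A`. -/
def logStretch (A : Ω → E →L[ℝ] E) (p : Ω × sphere (0 : E) 1) : ℝ :=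
  Real.log ‖A p.1 p.2‖

lemma linearCocycle_injective (hinj : ∀ ω, Function.Injective (A ω)) (ω : Ω) (n : ℕ) :
    Function.Injective (linearCocycle S A ω n) := by
  induction n with
  | zero => exact Function.injective_id
  | succ n ih => exact (hinj _).comp ih

section Continuity

variable [TopologicalSpace Ω]

lemma continuous_linearCocycle (hS : Continuous S) (hA : Continuous A) (n : ℕ) :
    Continuous fun ω => linearCocycle S A ω n := by
  induction n with
  | zero => exact continuous_const
  | succ n ih => exact (hA.comp (hS.iterate n)).mul ih

lemma continuous_log_norm_linearCocycle [Nontrivial E] (hS : Continuous S) (hA : Continuous A)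
    (hinj : ∀ ω, Function.Injective (A ω)) (n : ℕ) :
    Continuous fun ω => Real.log ‖linearCocycle S A ω n‖ := by
  obtain ⟨v⟩ : Nonempty (sphere (0 : E) 1) := (NormedSpace.sphere_nonempty.2 zero_le_one).to_subtype
  exact (continuous_linearCocycle hS hA n).norm.log fun ω =>
    ((norm_apply_sphere_pos (linearCocycle_injective hinj ω n) v).trans_le
      (norm_apply_sphere_le _ v)).ne'

lemma continuous_apply_sphere (hA : Continuous A) :
    Continuous fun p : Ω × sphere (0 : E) 1 => A p.1 p.2 :=
  (hA.comp continuous_fst).clm_apply (continuous_subtype_val.comp continuous_snd)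

lemma continuous_sphereSkewProduct (hS : Continuous S) (hA : Continuous A)
    (hinj : ∀ ω, Function.Injective (A ω)) : Continuous (sphereSkewProduct S A hinj) := by
  have h := continuous_apply_sphere hA
  exact (hS.comp continuous_fst).prodMk <| Continuous.subtype_mk
    ((h.norm.inv₀ fun p => (norm_apply_sphere_pos (hinj p.1) p.2).ne').smul h) _

lemma continuous_logStretch (hA : Continuous A) (hinj : ∀ ω, Function.Injective (A ω)) :
    Continuous (logStretch A) :=
  (continuous_apply_sphere hA).norm.log fun p => (norm_apply_sphere_pos (hinj p.1) p.2).ne'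

end Continuity

section BirkhoffSum

variable (hinj : ∀ ω, Function.Injective (A ω))

lemma semiconj_fst_sphereSkewProduct :
    Function.Semiconj Prod.fst (sphereSkewProduct S A hinj) S :=
  fun _ => rfl

lemma sphereSkewProduct_iterate_snd (n : ℕ) (p : Ω × sphere (0 : E) 1) :
    (((sphereSkewProduct S A hinj)^[n] p).2 : E) =
      ‖linearCocycle S A p.1 n p.2‖⁻¹ • linearCocycle S A p.1 n p.2 := by
  induction n with
  | zero => simp [linearCocycle]
  | succ n ih =>
    have hpos := norm_apply_sphere_pos (linearCocycle_injective hinj (S := S) p.1 n) p.2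
    have hfst := (semiconj_fst_sphereSkewProduct (S := S) hinj).iterate_right n p
    rw [Function.iterate_succ_apply', sphereSkewProduct]
    simp only [ih, hfst, linearCocycle, mul_apply_eq_comp, map_smul, norm_smul,
      norm_inv, norm_norm, mul_inv, inv_inv, smul_smul]
    congr 1
    field_simp

lemma birkhoffSum_logStretch (n : ℕ) (p : Ω × sphere (0 : E) 1) :
    birkhoffSum (sphereSkewProduct S A hinj) (logStretch A) n p =
      Real.log ‖linearCocycle S A p.1 n p.2‖ := by
  induction n with
  | zero => simp [linearCocycle]
  | succ n ih =>
    have hpos := norm_apply_sphere_pos (linearCocycle_injective hinj (S := S) p.1 n) p.2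
    have hpos' := norm_apply_sphere_pos (linearCocycle_injective hinj (S := S) p.1 (n + 1)) p.2
    have hfst := (semiconj_fst_sphereSkewProduct (S := S) hinj).iterate_right n p
    rw [linearCocycle, mul_apply_eq_comp] at hpos' ⊢
    rw [birkhoffSum_succ, ih, logStretch, hfst, sphereSkewProduct_iterate_snd, map_smul,
      norm_smul, norm_inv, norm_norm, Real.log_mul (inv_ne_zero hpos.ne') hpos'.ne', Real.log_inv]
    ring

end BirkhoffSum

section IntegralBounds

variable [Nontrivial E] [FiniteDimensional ℝ E] [MeasurableSpace E] [TopologicalSpace Ω]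
  [MeasurableSpace Ω] [BorelSpace Ω]

lemma exists_measurable_log_norm_linearCocycle_sub_le (hS : Continuous S) (hA : Continuous A)
    (hinj : ∀ ω, Function.Injective (A ω)) (n : ℕ) :
    ∃ v : Ω → sphere (0 : E) 1, Measurable v ∧ ∀ ω,
      Real.log ‖linearCocycle S A ω n‖ - Real.log 2 ≤ Real.log ‖linearCocycle S A ω n (v ω)‖ := by
  have hcont := continuous_linearCocycle hS hA n
  have hne (ω : Ω) : linearCocycle S A ω n ≠ 0 := fun h0 => by
    obtain ⟨w, hw⟩ := exists_ne (0 : E)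
    exact (map_ne_zero_iff _ (linearCocycle_injective hinj ω n)).2 hw (by rw [h0]; rfl)
  obtain ⟨v, hv, hlt⟩ := exists_measurable_selection_of_isOpen
    (U := fun ω => {w : sphere (0 : E) 1 |
      ‖linearCocycle S A ω n‖ < 2 * ‖linearCocycle S A ω n w‖})
    (fun ω => isOpen_lt continuous_const (by fun_prop))
    (fun ω => exists_sphere_opNorm_lt_two_mul (hne ω))
    fun w => (isOpen_lt hcont.norm (by fun_prop)).measurableSet
  refine ⟨v, hv, fun ω => ?_⟩
  rw [sub_le_iff_le_add', ← Real.log_mul two_ne_zero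
    (norm_apply_sphere_pos (linearCocycle_injective hinj ω n) (v ω)).ne']
  exact Real.log_le_log (norm_pos_iff.2 (hne ω)) (hlt ω).le

variable [BorelSpace E] [CompactSpace Ω] {ν : Measure Ω} [IsProbabilityMeasure ν]

lemma integral_birkhoffAverage_logStretch_le (hS : Continuous S) (hA : Continuous A)
    (hinj : ∀ ω, Function.Injective (A ω)) {m : Measure (Ω × sphere (0 : E) 1)}
    (hm : MeasurePreserving Prod.fst m ν) (n : ℕ) :
    ∫ p, birkhoffAverage ℝ (sphereSkewProduct S A hinj) (logStretch A) n p ∂m ≤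
      (n : ℝ)⁻¹ * ∫ ω, Real.log ‖linearCocycle S A ω n‖ ∂ν := by
  have := isProbabilityMeasure_of_measurePreserving hm
  have hlog := continuous_log_norm_linearCocycle hS hA hinj n
  rw [← hm.map_eq, integral_map hm.measurable.aemeasurable hlog.aestronglyMeasurable,
    ← integral_const_mul]
  refine integral_mono
    (integrable_of_continuous_of_compactSpace (continuous_birkhoffAverage
      (continuous_sphereSkewProduct hS hA hinj) (continuous_logStretch hA hinj) n) m)
    ((integrable_of_continuous_of_compactSpace (hlog.comp continuous_fst) m).const_mul _)
    fun p => ?_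
  rw [birkhoffAverage, birkhoffSum_logStretch, smul_eq_mul]
  gcongr
  · exact norm_apply_sphere_pos (linearCocycle_injective hinj p.1 n) p.2
  · exact norm_apply_sphere_le _ p.2

lemma exists_measurePreserving_fst_le_integral_birkhoffAverage_logStretch (hS : Continuous S)
    (hA : Continuous A) (hinj : ∀ ω, Function.Injective (A ω)) (n : ℕ) :
    ∃ m : Measure (Ω × sphere (0 : E) 1), MeasurePreserving Prod.fst m ν ∧
      (n : ℝ)⁻¹ * ∫ ω, Real.log ‖linearCocycle S A ω n‖ ∂ν - (n : ℝ)⁻¹ * Real.log 2 ≤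
        ∫ p, birkhoffAverage ℝ (sphereSkewProduct S A hinj) (logStretch A) n p ∂m := by
  obtain ⟨v, hv, hle⟩ := exists_measurable_log_norm_linearCocycle_sub_le hS hA hinj n
  have hgraph : Measurable fun ω => (ω, v ω) := measurable_id.prodMk hv
  have hfst : MeasurePreserving Prod.fst (ν.map fun ω => (ω, v ω)) ν :=
    ⟨measurable_fst, by rw [Measure.map_map measurable_fst hgraph]; exact Measure.map_id⟩
  have := isProbabilityMeasure_of_measurePreserving hfst
  have hcont := continuous_birkhoffAverage (continuous_sphereSkewProduct hS hA hinj)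
    (continuous_logStretch hA hinj) n
  have hlog : Integrable (fun ω => Real.log ‖linearCocycle S A ω n‖) ν :=
    integrable_of_continuous_of_compactSpace (continuous_log_norm_linearCocycle hS hA hinj n) ν
  refine ⟨_, hfst, ?_⟩
  calc (n : ℝ)⁻¹ * ∫ ω, Real.log ‖linearCocycle S A ω n‖ ∂ν - (n : ℝ)⁻¹ * Real.log 2
      = ∫ ω, (n : ℝ)⁻¹ * (Real.log ‖linearCocycle S A ω n‖ - Real.log 2) ∂ν := by
        rw [integral_const_mul, integral_sub hlog (integrable_const _), integral_const, mul_sub]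
        simp
    _ ≤ ∫ ω, birkhoffAverage ℝ (sphereSkewProduct S A hinj) (logStretch A) n (ω, v ω) ∂ν := by
        refine integral_mono ((hlog.sub (integrable_const _)).const_mul _)
          ((integrable_of_continuous_of_compactSpace hcont _).comp_measurable hgraph) fun ω => ?_
        rw [birkhoffAverage, birkhoffSum_logStretch, smul_eq_mul]
        exact mul_le_mul_of_nonneg_left (hle ω) (by positivity)
    _ = _ := (integral_map hgraph.aemeasurable hcont.aestronglyMeasurable).symm

lemma integral_logStretch_le_of_mem_invariantLifts (hS : Continuous S) (hA : Continuous A)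
    (hinj : ∀ ω, Function.Injective (A ω)) {lam : ℝ}
    (hlim : Tendsto (fun n : ℕ => (n : ℝ)⁻¹ * ∫ ω, Real.log ‖linearCocycle S A ω n‖ ∂ν)
      atTop (𝓝 lam)) {μ : Measure (Ω × sphere (0 : E) 1)}
    (hμ : μ ∈ invariantLifts (sphereSkewProduct S A hinj) Prod.fst ν) :
    ∫ p, logStretch A p ∂μ ≤ lam := by
  have := isProbabilityMeasure_of_measurePreserving hμ.2
  refine ge_of_tendsto hlim ((eventually_ne_atTop 0).mono fun n hn => ?_)
  rw [← integral_birkhoffAverage hμ.1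
    (integrable_of_continuous_of_compactSpace (continuous_logStretch hA hinj) μ) hn]
  exact integral_birkhoffAverage_logStretch_le hS hA hinj hμ.2 n

end IntegralBounds

end LinearCocycle

theorem exists_ergodic_lift_top_lyapunov_general {Ω E : Type*} [TopologicalSpace Ω]
    [CompactSpace Ω] [TopologicalSpace.MetrizableSpace Ω] [MeasurableSpace Ω] [BorelSpace Ω]
    [NormedAddCommGroup E] [NormedSpace ℝ E] [FiniteDimensional ℝ E] [Nontrivial E]
    [MeasurableSpace E] [BorelSpace E] {S : Ω → Ω} (hS : Continuous S) {A : Ω → E →L[ℝ] E}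
    (hA : Continuous A) (hinj : ∀ ω, Function.Injective (A ω)) {ν : Measure Ω}
    [IsProbabilityMeasure ν] (hν : Ergodic S ν) {lam : ℝ}
    (hlim : Tendsto (fun n : ℕ => (n : ℝ)⁻¹ * ∫ ω, Real.log ‖linearCocycle S A ω n‖ ∂ν)
      atTop (𝓝 lam)) :
    ∃ μ : Measure (Ω × sphere (0 : E) 1), IsProbabilityMeasure μ ∧
      Ergodic (sphereSkewProduct S A hinj) μ ∧ μ.map Prod.fst = ν ∧
      ∫ p, logStretch A p ∂μ = lam := by
  have hT := continuous_sphereSkewProduct hS hA hinj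
  have hsemi := semiconj_fst_sphereSkewProduct (S := S) hinj
  let φ : C(Ω × sphere (0 : E) 1, ℝ) := ⟨logStretch A, continuous_logStretch hA hinj⟩
  choose m hm hle using
    exists_measurePreserving_fst_le_integral_birkhoffAverage_logStretch (ν := ν) hS hA hinj
  have hlower : Tendsto (fun n : ℕ => (n : ℝ)⁻¹ * ∫ ω, Real.log ‖linearCocycle S A ω n‖ ∂ν -
      (n : ℝ)⁻¹ * Real.log 2) atTop (𝓝 lam) := by
    simpa using hlim.sub (tendsto_inv_atTop_nhds_zero_nat.mul_const (Real.log 2))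
  obtain ⟨μ₀, hμ₀, hφμ₀⟩ := exists_mem_invariantLifts_integral_eq hT continuous_fst hsemi
    hν.toMeasurePreserving hm φ (tendsto_of_tendsto_of_tendsto_of_le_of_le hlower hlim hle
      fun n => integral_birkhoffAverage_logStretch_le hS hA hinj (hm n) n)
  obtain ⟨μ, hμ, hergodic, hmax⟩ :=
    exists_ergodic_mem_invariantLifts_integral_le hT continuous_fst hsemi hν ⟨μ₀, hμ₀⟩ φ
  exact ⟨μ, isProbabilityMeasure_of_measurePreserving hμ.2, hergodic, hμ.2.map_eq,
    le_antisymm (integral_logStretch_le_of_mem_invariantLifts hS hA hinj hlim hμ)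
      (hφμ₀ ▸ hmax μ₀ hμ₀)⟩

section Shift

variable {d κ : ℕ}

lemma continuous_shiftZ : Continuous (shiftZ : (ℤ → Fin κ) → ℤ → Fin κ) :=
  continuous_pi fun n => continuous_apply (n + 1)

lemma continuous_toEuclideanCLM : Continuous fun B : Matrix (Fin d) (Fin d) ℝ =>
    Matrix.toEuclideanCLM (𝕜 := ℝ) B :=
  LinearMap.continuous_of_finiteDimensional
    (Matrix.toEuclideanCLM (n := Fin d) (𝕜 := ℝ)).toAlgEquiv.toLinearMap

lemma toEuclideanCLM_injective (B : Matrix.SpecialLinearGroup (Fin d) ℝ) :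
    Function.Injective (Matrix.toEuclideanCLM (𝕜 := ℝ) (B : Matrix (Fin d) (Fin d) ℝ)) :=
  (injective_iff_map_eq_zero _).2 fun _ h => by_contra fun hv => mvec_ne_zero B hv h

lemma toEuclideanCLM_cocycleProdZ (A : (ℤ → Fin κ) → Matrix.SpecialLinearGroup (Fin d) ℝ)
    (ω : ℤ → Fin κ) (n : ℕ) :
    Matrix.toEuclideanCLM (𝕜 := ℝ) (cocycleProdZ A ω n : Matrix (Fin d) (Fin d) ℝ) =
      linearCocycle shiftZ (fun ω => Matrix.toEuclideanCLM (𝕜 := ℝ) (A ω).1) ω n := by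
  induction n with
  | zero => exact map_one _
  | succ n ih => rw [cocycleProdZ, linearCocycle, ← ih]; exact map_mul _ _ _

end Shift

/-- **Ergodic lifts realizing the top Lyapunov exponent.** Let `A : Σ̂_κ → SL(d,ℝ)` be a
continuous cocycle over the two-sided shift and let `ν` be a shift-invariant ergodic
probability measure whose top Lyapunov exponent `λ = lim (1/n) ∫ log ‖A⁽ⁿ⁾(ω)‖ dν` exists
(operator norm on `ℝ^d`). Then there is an ergodic invariant probability measure `μ` for
the projectivized skew product `P_A` on `Σ̂_κ × S^{d-1}` projecting to `ν` on the first
coordinate and satisfying `∫ φ_A dμ = λ`. -/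
theorem exists_ergodic_lift_top_lyapunov (d κ : ℕ) (hd : 2 ≤ d) (hκ : 1 ≤ κ)
    (A : (ℤ → Fin κ) → Matrix.SpecialLinearGroup (Fin d) ℝ)
    (hA : Continuous fun ω => (A ω : Matrix (Fin d) (Fin d) ℝ))
    (ν : Measure (ℤ → Fin κ)) [IsProbabilityMeasure ν]
    (hν : Ergodic shiftZ ν)
    (lam : ℝ)
    (hlim : Tendsto (fun n : ℕ => (n : ℝ)⁻¹ *
        ∫ ω, Real.log
          ‖Matrix.toEuclideanCLM (𝕜 := ℝ) (cocycleProdZ A ω n : Matrix (Fin d) (Fin d) ℝ)‖ ∂ν)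
      atTop (nhds lam)) :
    ∃ μ : Measure ((ℤ → Fin κ) × sphType d), IsProbabilityMeasure μ ∧
      Ergodic (projSkew A) μ ∧ μ.map Prod.fst = ν ∧ ∫ p, phiA A p ∂μ = lam := by
  have : Nontrivial (Fin d) := Fin.nontrivial_iff_two_le.2 hd
  simp only [toEuclideanCLM_cocycleProdZ] at hlim
  exact exists_ergodic_lift_top_lyapunov_general continuous_shiftZ
    (continuous_toEuclideanCLM.comp hA) (fun ω => toEuclideanCLM_injective (A ω)) hν hlim

end
end

section
/- Let 𝕋² = (ℝ/ℤ) × (ℝ/ℤ) be the two-dimensional torus with its product metric, and let f_A : 𝕋² → 𝕋² be the hyperbolic automorphism induced by the matrix A = [[2,1],[1,1]], i.e. f_A(x,y) = (2x + y, x + y) (mod ℤ²). Then f_A does not have frequent hitting times: there exists ε > 0 such that for every K ∈ ℕ there are points x₁, x₂ ∈ 𝕋² and a radius r with 0 < r ≤ ε/2 such that for every 0 ≤ p ≤ K there is no point z with the ball B(z, r/2) contained in f_A^p(B(x₁,ε)) ∩ B(x₂,r). -/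
open Metric

noncomputable section

/-- The two-dimensional torus `𝕋² = (ℝ/ℤ) × (ℝ/ℤ)` with its product metric. -/
abbrev Torus2 : Type := AddCircle (1 : ℝ) × AddCircle (1 : ℝ)

/-- The hyperbolic automorphism of `𝕋²` induced by the matrix `[[2,1],[1,1]]`:
`f_A(x,y) = (2x + y, x + y) (mod ℤ²)`. -/
def catMap (p : Torus2) : Torus2 :=
  (p.1 + p.1 + p.2, p.1 + p.2)

/-!
Whether iterates of a ball can reach a point `x` is decided by the backward orbit of `x`. If this
backward orbit is not dense, some compact set `s` with nonempty interior misses it. The finitely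
many images `f^p(s)` with `p ≤ K` are then compact and do not contain `x`, so all of them miss a
small ball around `x`, whose radius depends on `K` although `s` does not. For the cat map take
`x = 0`: it is fixed by a bijection, hence its backward orbit is `{0}`.
-/

open Function Topology

section FrequentHittingTimes

/-- The frequent hitting times property: for each `ε > 0`, a bounded number of iterates suffices to
make the image of any `ε`-ball cover a ball of half the radius inside any given ball of radius
at most `ε / 2`. As in the paper, `p = 0` counts as a hitting time. The paper's standing
assumptions that `X` is compact and `f` continuous are not part of the definition. -/
def HasFrequentHittingTimes {X : Type*} [PseudoMetricSpace X] (f : X → X) : Prop :=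
  ∀ ε : ℝ, 0 < ε → ∃ K : ℕ, ∀ x₁ x₂ : X, ∀ r : ℝ, 0 < r → r ≤ ε / 2 →
    ∃ p ≤ K, ∃ z : X, ball z (r / 2) ⊆ f^[p] '' ball x₁ ε ∩ ball x₂ r

/-- The backward orbit of `x`: all points whose forward orbit passes through `x`. It contains `x`
itself, and `f` need not be invertible. -/
def backwardOrbit {X : Type*} (f : X → X) (x : X) : Set X :=
  {y | ∃ p, f^[p] y = x}

variable {X : Type*} {f : X → X} {x : X}

theorem backwardOrbit_eq_singleton (hinj : Injective f) (hx : IsFixedPt f x) :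
    backwardOrbit f x = {x} := by
  ext y
  exact ⟨fun ⟨p, hp⟩ ↦ hinj.iterate p (hp.trans (hx.iterate p).symm), fun hy ↦ ⟨0, hy⟩⟩

theorem not_dense_backwardOrbit_of_isFixedPt [TopologicalSpace X] [T1Space X] [Nontrivial X]
    (hinj : Injective f) (hx : IsFixedPt f x) : ¬ Dense (backwardOrbit f x) := by
  rw [backwardOrbit_eq_singleton hinj hx, dense_iff_closure_eq, closure_singleton]
  exact Set.singleton_ne_univ x

theorem eventually_forall_le_notMem_iterate_image [TopologicalSpace X] [T2Space X] {s : Set X}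
    (hf : Continuous f) (hs : IsCompact s) (hdisj : Disjoint s (backwardOrbit f x)) (K : ℕ) :
    ∀ᶠ y in 𝓝 x, ∀ p ≤ K, y ∉ f^[p] '' s := by
  refine (Set.finite_Iic K).eventually_all.2 fun p _ ↦ ?_
  have hclosed : IsClosed (f^[p] '' s) := (hs.image (hf.iterate p)).isClosed
  refine hclosed.isOpen_compl.eventually_mem ?_
  rintro ⟨y, hys, hyx⟩
  exact hdisj.notMem_of_mem_left hys ⟨p, hyx⟩

theorem exists_isCompact_ball_subset_disjoint_of_not_dense [PseudoMetricSpace X]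
    [LocallyCompactSpace X] {t : Set X} (ht : ¬ Dense t) :
    ∃ s : Set X, IsCompact s ∧ Disjoint s t ∧ ∃ a, ∃ ε > 0, ball a ε ⊆ s := by
  obtain ⟨a, ha⟩ : ∃ a, a ∉ closure t := not_forall.1 ht
  obtain ⟨s, hs_nhds, hst, hs⟩ := local_compact_nhds (isClosed_closure.compl_mem_nhds ha)
  exact ⟨s, hs, (Set.subset_compl_iff_disjoint_right.1 hst).mono_right subset_closure, a,
    Metric.mem_nhds_iff.1 hs_nhds⟩

theorem catMap_not_frequentHittingTimes_general [MetricSpace X] [LocallyCompactSpace X]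
    (hf : Continuous f) (hx : ¬ Dense (backwardOrbit f x)) : ¬ HasFrequentHittingTimes f := by
  intro hfreq
  obtain ⟨s, hs, hdisj, a, ε, hε, has⟩ := exists_isCompact_ball_subset_disjoint_of_not_dense hx
  obtain ⟨K, hK⟩ := hfreq ε hε
  obtain ⟨δ, hδ, hmiss⟩ :=
    Metric.eventually_nhds_iff_ball.1 (eventually_forall_le_notMem_iterate_image hf hs hdisj K)
  have hr : 0 < min δ (ε / 2) := lt_min hδ (half_pos hε)
  obtain ⟨p, hp, z, hz⟩ := hK a x (min δ (ε / 2)) hr (min_le_right _ _)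
  obtain ⟨hz_image, hzx⟩ := hz (mem_ball_self (half_pos hr))
  exact hmiss z (ball_subset_ball (min_le_left _ _) hzx) p hp (Set.image_mono has hz_image)

end FrequentHittingTimes

instance nontrivial_addCircle {𝕜 : Type*} [AddCommGroup 𝕜] [LinearOrder 𝕜] [IsOrderedAddMonoid 𝕜]
    [DenselyOrdered 𝕜] [Nontrivial 𝕜] {p : 𝕜} : Nontrivial (AddCircle p) :=
  QuotientAddGroup.nontrivial_iff.2 fun htop ↦
    not_isAddCyclic_of_denselyOrdered 𝕜 ⟨⟨p, (AddSubgroup.eq_top_iff' _).1 htop⟩⟩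

theorem continuous_catMap : Continuous catMap := by
  unfold catMap
  fun_prop

theorem catMap_injective : Injective catMap := by
  have hinv : LeftInverse (fun q : Torus2 ↦ (q.1 - q.2, q.2 + q.2 - q.1)) catMap := fun q ↦
    Prod.ext (by simp only [catMap]; abel) (by simp only [catMap]; abel)
  exact hinv.injective

theorem isFixedPt_catMap_zero : IsFixedPt catMap 0 := by
  simp [IsFixedPt, catMap]

/-- **The hyperbolic toral automorphism does not have frequent hitting times.**
There exists `ε > 0` such that for every candidate constant `K` there are points
`x₁, x₂ ∈ 𝕋²` and a radius `0 < r ≤ ε/2` such that for no `0 ≤ p ≤ K` does there exist a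
point `z` with `B(z, r/2) ⊆ f_A^p(B(x₁,ε)) ∩ B(x₂,r)`. -/
theorem catMap_not_frequentHittingTimes :
    ∃ ε : ℝ, 0 < ε ∧ ∀ K : ℕ, ∃ x₁ x₂ : Torus2, ∃ r : ℝ,
      0 < r ∧ r ≤ ε / 2 ∧ ∀ p ≤ K,
        ¬ ∃ z : Torus2,
          Metric.ball z (r / 2) ⊆ catMap^[p] '' Metric.ball x₁ ε ∩ Metric.ball x₂ r := by
  simpa [HasFrequentHittingTimes] using catMap_not_frequentHittingTimes_general continuous_catMap
    (not_dense_backwardOrbit_of_isFixedPt catMap_injective isFixedPt_catMap_zero)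

end
end
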